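/- Let p = q ≥ 4 and n = p + q. Every tree T ∈ 𝒯_n^{p,q} that is isomorphic to none of B_{p,q}^{0,0}, B_{p,q}^{0,1}, B_{p,q}^{2,0} satisfies T ≺_s B_{p,q}^{2,0}; that is, for p = q ≥ 4 the tree B_{p,q}^{2,0} is the unique third last tree in the S-order among 𝒯_n^{p,q}. -/

import Mathlib

open SimpleGraph

open scoped Classical in
/-- The adjacency matrix of a simple graph, with real entries. -/
noncomputable def adjMat {V : Type*} [Fintype V] (G : SimpleGraph V) : Matrix V V ℝ :=
  Matrix.of fun a b => if G.Adj a b then 1 else 0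

/-- The `k`-th spectral moment `S_k(G) = tr(A(G)^k)`. -/
noncomputable def spectralMoment {V : Type*} [Fintype V] [DecidableEq V]
    (G : SimpleGraph V) (k : ℕ) : ℝ :=
  Matrix.trace (adjMat G ^ k)

/-- `SLt G₁ G₂` means `G₁ ≺_s G₂`: for some `k` with `1 ≤ k ≤ n - 1`,
`S_i(G₁) = S_i(G₂)` for all `i < k` and `S_k(G₁) < S_k(G₂)`. -/
def SLt {V : Type*} [Fintype V] [DecidableEq V] (G₁ G₂ : SimpleGraph V) : Prop :=
  ∃ k : ℕ, 1 ≤ k ∧ k ≤ Fintype.card V - 1 ∧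
    (∀ i < k, spectralMoment G₁ i = spectralMoment G₂ i) ∧
    spectralMoment G₁ k < spectralMoment G₂ k

/-- The tree `B_{p,q}^{k,l}` on `p + q` vertices: vertex `0 = u` is adjacent to `1 = v`
and to the `q - 1` vertices `2, …, q`; the distinguished neighbor `2` of `u` carries the
`k` pendant leaves `q+1, …, q+k`; the `l` neighbors `3, …, l+2` of `u` carry one pendant
leaf each (`q+k+j` is attached to `j+2` for `1 ≤ j ≤ l`); and `v` carries the
`p - k - l - 1` pendant leaves `q+k+l+1, …, p+q-1`. -/
def BTree (p q k l : ℕ) : SimpleGraph (Fin (p + q)) :=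
  SimpleGraph.fromRel (fun a b =>
    (a.val = 0 ∧ b.val = 1) ∨
    (a.val = 0 ∧ 2 ≤ b.val ∧ b.val ≤ q) ∨
    (a.val = 2 ∧ q + 1 ≤ b.val ∧ b.val ≤ q + k) ∨
    (q + k + 1 ≤ b.val ∧ b.val ≤ q + k + l ∧ a.val = b.val - (q + k) + 2) ∨
    (a.val = 1 ∧ q + k + l + 1 ≤ b.val))

/-- The tree `D_{p,q}^{k,l}` on `p + q` vertices: vertex `1 = v` is adjacent to `0 = u`
and to the `p - 1` vertices `2, …, p`; the distinguished neighbor `2` of `v` carries the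
`k` pendant leaves `p+1, …, p+k`; the `l` neighbors `3, …, l+2` of `v` carry one pendant
leaf each; and `u` carries the `q - k - l - 1` pendant leaves `p+k+l+1, …, p+q-1`. -/
def DTree (p q k l : ℕ) : SimpleGraph (Fin (p + q)) :=
  SimpleGraph.fromRel (fun a b =>
    (a.val = 0 ∧ b.val = 1) ∨
    (a.val = 1 ∧ 2 ≤ b.val ∧ b.val ≤ p) ∨
    (a.val = 2 ∧ p + 1 ≤ b.val ∧ b.val ≤ p + k) ∨
    (p + k + 1 ≤ b.val ∧ b.val ≤ p + k + l ∧ a.val = b.val - (p + k) + 2) ∨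
    (a.val = 0 ∧ p + k + l + 1 ≤ b.val))

/-- `T ∈ 𝒯_{p+q}^{p,q}`: `T` is a tree on `p + q` vertices with a `(p,q)`-bipartition. -/
def TreeBip (p q : ℕ) (G : SimpleGraph (Fin (p + q))) : Prop :=
  G.IsTree ∧ ∃ A : Finset (Fin (p + q)), A.card = p ∧
    ∀ ⦃x y : Fin (p + q)⦄, G.Adj x y → (x ∈ A ↔ y ∉ A)

open Finset in
lemma sum_sq_le_sq_add_sq {V : Type*} [DecidableEq V] (s : Finset V) (e : V → ℕ) {v : V}
    (hv : v ∈ s) :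
    ∑ x ∈ s, e x ^ 2 ≤ e v ^ 2 + (∑ x ∈ s.erase v, e x) ^ 2 := by
  rw [← add_sum_erase s (fun x => e x ^ 2) hv]
  gcongr
  exact sum_sq_le_sq_sum_of_nonneg (fun _ _ => Nat.zero_le _)

open Finset in
lemma sum_sq_le_of_le_pred {V : Type*} [DecidableEq V] (s : Finset V) (e : V → ℕ) {m : ℕ}
    (hsum : ∑ x ∈ s, e x = m + 1) (hle : ∀ x ∈ s, e x ≤ m) :
    ∑ x ∈ s, e x ^ 2 ≤ m ^ 2 + 1 := by
  obtain ⟨v, hv, hpos⟩ : ∃ v ∈ s, 0 < e v := by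
    by_contra! h
    have := sum_eq_zero fun x hx => Nat.le_zero.1 (h x hx)
    omega
  have h := sum_sq_le_sq_add_sq s e hv
  have herase := add_sum_erase s e hv
  have hvm := hle v hv
  obtain ⟨b, hb⟩ := Nat.exists_eq_add_of_le hvm
  obtain ⟨a, ha⟩ := Nat.exists_eq_add_of_lt hpos
  have hr : ∑ x ∈ s.erase v, e x = b + 1 := by omega
  rw [hr] at h
  have : e v = a + 1 := by omega
  rw [this] at h hb
  subst hb
  nlinarith [Nat.zero_le (a * b)]

open Finset in
/-- A composition of `m ≥ 3` is `(m)`, `(m - 1, 1)` or `(m - 2, 2)` up to zero parts, or the sum of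
the squares of its parts is less than `(m - 2) ^ 2 + 2 ^ 2`. -/
lemma exists_two_parts_or_sum_sq_lt {V : Type*} [DecidableEq V] (s : Finset V) (e : V → ℕ)
    {m : ℕ} (hm : 3 ≤ m) (hs : 1 < s.card) (hsum : ∑ x ∈ s, e x = m) :
    (∃ k ≤ 2, ∃ v ∈ s, ∃ w ∈ s, v ≠ w ∧ e v = m - k ∧ e w = k) ∨
      ∑ x ∈ s, e x ^ 2 < (m - 2) ^ 2 + 4 := by
  obtain ⟨v, hv, hmax⟩ := exists_max_image s e (card_pos.1 (by omega))
  have h := sum_sq_le_sq_add_sq s e hv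
  have herase := add_sum_erase s e hv
  have herasesq := add_sum_erase s (fun x => e x ^ 2) hv
  have hmul : ∑ x ∈ s, e x ^ 2 ≤ e v * m := by
    rw [← hsum, mul_sum]
    refine sum_le_sum fun x hx => ?_
    rw [sq]
    exact Nat.mul_le_mul_right _ (hmax x hx)
  obtain ⟨a, ha⟩ : ∃ a, ∑ x ∈ s.erase v, e x = a := ⟨_, rfl⟩
  rw [ha] at h herase
  obtain ⟨w, hw, hwv⟩ := exists_mem_ne hs v
  rcases Nat.lt_or_ge a 3 with ha3 | ha3
  · by_cases hk : ∃ w ∈ s.erase v, e w = a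
    · obtain ⟨w, hw, hwa⟩ := hk
      exact .inl ⟨a, by omega, v, hv, w, mem_of_mem_erase hw, (ne_of_mem_erase hw).symm,
        by omega, hwa⟩
    · right
      push Not at hk
      have hlt : ∀ x ∈ s.erase v, e x < a := fun x hx =>
        lt_of_le_of_ne (ha ▸ single_le_sum (f := e) (fun _ _ => Nat.zero_le _) hx) (hk x hx)
      have hw1 := hlt w (mem_erase.2 ⟨hwv, hw⟩)
      have h01 : ∀ x ∈ s.erase v, e x ^ 2 = e x := by
        intro x hx
        have := hlt x hx
        interval_cases a <;> interval_cases hx' : e x <;> simp_all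
      have ha2 : a = 2 := by
        by_contra hne
        have ha0 : ∑ x ∈ s.erase v, e x = 0 := sum_eq_zero fun x hx => by
          have := hlt x hx
          omega
        omega
      rw [sum_congr rfl h01, ha, ha2] at herasesq
      have : e v = m - 2 := by omega
      rw [this] at herasesq
      omega
  · right
    rcases Nat.lt_or_ge (e v) 3 with hv3 | hv3
    · obtain ⟨t, rfl⟩ := Nat.exists_eq_add_of_le hm
      have : 3 + t - 2 = t + 1 := by omega
      rw [this]
      interval_cases hev : e v
      · omega
      · nlinarith
      · nlinarith
    · obtain ⟨i, hi⟩ := Nat.exists_eq_add_of_le hv3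
      obtain ⟨j, rfl⟩ := Nat.exists_eq_add_of_le ha3
      have : m - 2 = i + j + 4 := by omega
      rw [this]
      rw [hi] at h
      nlinarith [Nat.zero_le (i * j)]

section Moments

open scoped Classical
open Finset

variable {V : Type*} [Fintype V]

/-- The number of common neighbors of two vertices. -/
noncomputable def codegree (G : SimpleGraph V) (a b : V) : ℕ :=
  #{c | G.Adj a c ∧ G.Adj c b}

lemma codegree_self (G : SimpleGraph V) (a : V) : codegree G a a = G.degree a := by
  rw [codegree, ← G.card_neighborFinset_eq_degree a]
  congr 1
  ext c
  simp [G.adj_comm c a]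

lemma sum_codegree (G : SimpleGraph V) :
    ∑ a, ∑ b, codegree G a b = ∑ c, G.degree c ^ 2 := by
  simp only [codegree, card_filter]
  have hdeg : ∀ c, G.degree c = ∑ a, if G.Adj a c then 1 else 0 := by
    intro c
    rw [← card_filter, ← G.card_neighborFinset_eq_degree c]
    congr 1
    ext a
    simp [G.adj_comm c a]
  calc
    _ = ∑ c, ∑ a, ∑ b, if G.Adj a c ∧ G.Adj c b then 1 else 0 := by
      rw [sum_comm' (t' := univ) (s' := fun _ => univ) (by simp)]
      rw [sum_comm]
      conv_rhs => rw [sum_comm]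
      refine sum_congr rfl fun a _ => ?_
      rw [sum_comm' (t' := univ) (s' := fun _ => univ) (by simp)]
    _ = _ := by
      refine sum_congr rfl fun c _ => ?_
      rw [sq, hdeg, sum_mul_sum]
      refine sum_congr rfl fun a _ => sum_congr rfl fun b _ => ?_
      rw [G.adj_comm b c]
      split_ifs <;> simp_all

lemma adjMat_mul_self_apply (G : SimpleGraph V) (a b : V) :
    (adjMat G * adjMat G) a b = codegree G a b := by
  simp only [Matrix.mul_apply, adjMat, Matrix.of_apply, codegree, card_filter, Nat.cast_sum]
  refine sum_congr rfl fun c _ => ?_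
  split_ifs <;> simp_all

lemma codegree_le_one (G : SimpleGraph V) (hG : G.IsAcyclic) {a b : V} (hab : a ≠ b) :
    codegree G a b ≤ 1 := by
  rw [codegree, card_le_one]
  intro c hc d hd
  simp only [mem_filter, mem_univ, true_and] at hc hd
  let P : ∀ c, G.Adj a c → G.Adj c b → G.Path a b := fun c h h' =>
    ⟨.cons h (.cons h' .nil), by simp [h.ne, h'.ne, hab]⟩
  have h := (hG.subsingleton_path a b).elim (P c hc.1 hc.2) (P d hd.1 hd.2)
  have h' := congrArg (fun w : G.Path a b => w.1.support) h
  simpa [P] using h'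

variable [DecidableEq V]

lemma spectralMoment_zero (G : SimpleGraph V) : spectralMoment G 0 = Fintype.card V := by
  simp [spectralMoment]

lemma spectralMoment_one (G : SimpleGraph V) : spectralMoment G 1 = 0 := by
  simp [spectralMoment, Matrix.trace, adjMat]

lemma spectralMoment_two (G : SimpleGraph V) :
    spectralMoment G 2 = (∑ a, G.degree a : ℕ) := by
  have h : adjMat G ^ 2 = adjMat G * adjMat G := pow_two _
  rw [spectralMoment, h]
  simp [Matrix.trace, adjMat_mul_self_apply, codegree_self]

lemma spectralMoment_three (G : SimpleGraph V) (A : Set V)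
    (hA : ∀ ⦃x y⦄, G.Adj x y → (x ∈ A ↔ y ∉ A)) : spectralMoment G 3 = 0 := by
  have h : adjMat G ^ 3 = adjMat G * adjMat G * adjMat G := by
    rw [pow_succ, pow_two]
  rw [spectralMoment, h, Matrix.trace]
  refine sum_eq_zero fun a _ => ?_
  rw [Matrix.diag_apply, Matrix.mul_apply]
  refine sum_eq_zero fun b _ => ?_
  rw [adjMat_mul_self_apply]
  by_cases hba : G.Adj b a
  · suffices codegree G a b = 0 by simp [this]
    rw [codegree, card_eq_zero, filter_eq_empty_iff]
    rintro c - ⟨hac, hcb⟩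
    have := hA hac
    have := hA hcb
    have := hA hba
    tauto
  · simp [adjMat, hba]

lemma spectralMoment_four (G : SimpleGraph V) :
    spectralMoment G 4 = (∑ a, ∑ b, codegree G a b ^ 2 : ℕ) := by
  have h : adjMat G ^ 4 = (adjMat G * adjMat G) * (adjMat G * adjMat G) := by
    rw [pow_mul (adjMat G) 2 2, pow_two, pow_two]
  rw [spectralMoment, h, Matrix.trace]
  push_cast
  refine sum_congr rfl fun a _ => ?_
  rw [Matrix.diag_apply, Matrix.mul_apply]
  refine sum_congr rfl fun b _ => ?_
  have hsymm : codegree G b a = codegree G a b := by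
    simp only [codegree, G.adj_comm b, G.adj_comm a, and_comm]
  rw [adjMat_mul_self_apply, adjMat_mul_self_apply, hsymm, sq]

lemma sum_codegree_add_diag (G : SimpleGraph V) :
    ∑ a, ∑ b, (codegree G a b + if a = b then G.degree a ^ 2 - G.degree a else 0) +
      ∑ a, G.degree a = 2 * ∑ a, G.degree a ^ 2 := by
  simp only [sum_add_distrib, sum_codegree, sum_ite_eq, mem_univ, if_true]
  rw [add_assoc, ← sum_add_distrib, two_mul]
  congr 1
  refine sum_congr rfl fun a _ => Nat.sub_add_cancel (Nat.le_self_pow two_ne_zero _)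

lemma two_mul_sum_degree_sq_le (G : SimpleGraph V) :
    2 * ∑ a, G.degree a ^ 2 ≤ ∑ a, ∑ b, codegree G a b ^ 2 + ∑ a, G.degree a := by
  rw [← sum_codegree_add_diag]
  gcongr with a _ b _
  split_ifs with hab
  · subst hab
    rw [codegree_self, Nat.add_sub_cancel' (Nat.le_self_pow two_ne_zero _)]
  · exact Nat.le_self_pow two_ne_zero _

lemma sum_codegree_sq_of_isAcyclic (G : SimpleGraph V) (hG : G.IsAcyclic) :
    ∑ a, ∑ b, codegree G a b ^ 2 + ∑ a, G.degree a = 2 * ∑ a, G.degree a ^ 2 := by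
  rw [← sum_codegree_add_diag]
  congr 1
  refine sum_congr rfl fun a _ => sum_congr rfl fun b _ => ?_
  split_ifs with hab
  · subst hab
    rw [codegree_self, Nat.add_sub_cancel' (Nat.le_self_pow two_ne_zero _)]
  · have := codegree_le_one G hG hab
    interval_cases codegree G a b <;> rfl

/-- Among bipartite graphs with equally many edges, an acyclic graph precedes in the `S`-order every
graph with a larger sum of squared degrees. -/
lemma sLt_of_sum_degree_sq_lt (G H : SimpleGraph V) (hV : 5 ≤ Fintype.card V) (hG : G.IsAcyclic)
    (A B : Set V) (hA : ∀ ⦃x y⦄, G.Adj x y → (x ∈ A ↔ y ∉ A))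
    (hB : ∀ ⦃x y⦄, H.Adj x y → (x ∈ B ↔ y ∉ B))
    (hdeg : ∑ a, G.degree a = ∑ a, H.degree a)
    (hlt : ∑ a, G.degree a ^ 2 < ∑ a, H.degree a ^ 2) : SLt G H := by
  refine ⟨4, by norm_num, by omega, fun i hi => ?_, ?_⟩
  · interval_cases i
    · simp [spectralMoment_zero]
    · simp [spectralMoment_one]
    · simp [spectralMoment_two, hdeg]
    · rw [spectralMoment_three G A hA, spectralMoment_three H B hB]
  · rw [spectralMoment_four, spectralMoment_four, Nat.cast_lt]
    have h₁ := sum_codegree_sq_of_isAcyclic G hG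
    have h₂ := two_mul_sum_degree_sq_le H
    omega

end Moments

section Roles

open scoped Classical
open Finset

/-- Adjacency between the six kinds of vertices of a tree in which `u` (kind `0`) has the neighbors
`v` (kind `1`), `w` (kind `2`) and leaves (kind `3`), while `v` carries further leaves (kind `4`)
and `w` carries further leaves (kind `5`). -/
def kindAdj : Fin 6 → Fin 6 → Bool :=
  ![![false, true, true, true, false, false], ![true, false, false, false, true, false],
    ![true, false, false, false, false, true], ![true, false, false, false, false, false],
    ![false, true, false, false, false, false], ![false, false, true, false, false, false]]

/-- The number of vertices of each kind. -/
def kindCount (p k : ℕ) : Fin 6 → ℕ := ![1, 1, 1, p - 2, p - 1 - k, k]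

/-- `c` assigns kinds to the vertices of `G` so that they determine adjacency, and `G` has the
shape of `B_{p,p}` with `k` leaves carried by `w` and `p - 1 - k` by `v`. -/
structure IsKinds {V : Type*} [Fintype V] (G : SimpleGraph V) (p k : ℕ) (c : V → Fin 6) :
    Prop where
  adj : ∀ x y, G.Adj x y ↔ kindAdj (c x) (c y)
  count : ∀ i, #{x | c x = i} = kindCount p k i

variable {V W : Type*} [Fintype V] [Fintype W]

lemma IsKinds.nonempty_iso {G : SimpleGraph V} {H : SimpleGraph W} {p k : ℕ} {c : V → Fin 6}
    {d : W → Fin 6} (hG : IsKinds G p k c) (hH : IsKinds H p k d) : Nonempty (G ≃g H) := by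
  have e : ∀ i, Nonempty ({x // c x = i} ≃ {x // d x = i}) := fun i => by
    rw [← Fintype.card_eq, Fintype.card_subtype, Fintype.card_subtype, hG.count, hH.count]
  let f : V ≃ W := Equiv.ofFiberEquiv fun i => (e i).some
  refine ⟨⟨f, fun {x y} => ?_⟩⟩
  rw [hG.adj, hH.adj, show d (f x) = c x from Equiv.ofFiberEquiv_map _ x,
    show d (f y) = c y from Equiv.ofFiberEquiv_map _ y]

lemma IsKinds.degree_eq {G : SimpleGraph V} {p k : ℕ} {c : V → Fin 6} (h : IsKinds G p k c)
    (x : V) : G.degree x = ∑ j, if kindAdj (c x) j then kindCount p k j else 0 := by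
  rw [← G.card_neighborFinset_eq_degree x,
    card_eq_sum_card_fiberwise (f := c) (t := univ) (by simp)]
  refine sum_congr rfl fun j _ => ?_
  rw [← h.count j]
  split_ifs with hj
  · congr 1
    ext y
    simp only [mem_filter, mem_neighborFinset, h.adj, mem_univ, true_and]
    constructor
    · exact fun hy => hy.2
    · rintro rfl
      exact ⟨hj, rfl⟩
  · rw [card_eq_zero, filter_eq_empty_iff]
    rintro y hy rfl
    rw [mem_neighborFinset, h.adj] at hy
    exact hj hy

lemma IsKinds.sum_comp_degree {G : SimpleGraph V} {p k : ℕ} {c : V → Fin 6}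
    (h : IsKinds G p k c) (f : ℕ → ℕ) :
    ∑ x, f (G.degree x) = ∑ i, kindCount p k i *
      f (∑ j, if kindAdj i j then kindCount p k j else 0) := by
  simp only [h.degree_eq]
  rw [← sum_fiberwise (s := univ) (g := c)]
  refine sum_congr rfl fun i _ => ?_
  rw [← h.count i, ← smul_eq_mul, ← sum_const]
  refine sum_congr rfl fun x hx => ?_
  rw [(mem_filter.1 hx).2]

lemma IsKinds.bipartite {G : SimpleGraph V} {p k : ℕ} {c : V → Fin 6} (h : IsKinds G p k c)
    ⦃x y : V⦄ (hxy : G.Adj x y) :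
    x ∈ {x | c x ∈ ({0, 4, 5} : Set (Fin 6))} ↔ y ∉ {x | c x ∈ ({0, 4, 5} : Set (Fin 6))} := by
  rw [h.adj] at hxy
  simp only [Set.mem_ofPred_eq, Set.mem_insert_iff, Set.mem_singleton_iff]
  generalize c x = i at *
  generalize c y = j at *
  revert i j
  decide

lemma IsKinds.sum_degree {G : SimpleGraph V} {p : ℕ} (hp : 4 ≤ p) {c : V → Fin 6}
    (h : IsKinds G p 2 c) : ∑ x, G.degree x = 2 * (2 * p - 1) := by
  rw [h.sum_comp_degree fun d => d]
  simp [Fin.sum_univ_succ, kindCount, kindAdj]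
  omega

lemma IsKinds.sum_degree_sq {G : SimpleGraph V} {p : ℕ} (hp : 4 ≤ p) {c : V → Fin 6}
    (h : IsKinds G p 2 c) : ∑ x, G.degree x ^ 2 = p ^ 2 + (p - 2) ^ 2 + 9 + (2 * p - 3) := by
  rw [h.sum_comp_degree fun d => d ^ 2]
  obtain ⟨t, rfl⟩ := Nat.exists_eq_add_of_le hp
  have h₁ : 4 + t - 2 = t + 2 := by omega
  have h₂ : 3 + t - 2 = t + 1 := by omega
  have h₃ : 2 * (4 + t) - 3 = 2 * t + 5 := by omega
  simp [Fin.sum_univ_succ, kindCount, kindAdj, h₁, h₃]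
  ring_nf
  rw [h₂]
  ring

/-- The kinds of the vertices of `B_{p,p}^{k,l}` for `l ≤ 1`. -/
def bKind (p k l : ℕ) (x : ℕ) : Fin 6 :=
  if x = 0 then 0 else if x = 1 then 1 else if x = 2 + l then 2 else if x ≤ p then 3
  else if x ≤ p + k + l then 5 else 4

set_option maxHeartbeats 2000000 in
lemma isKinds_bTree {p k l : ℕ} (hp : 3 ≤ p) (hl : l ≤ 1) (hkl : k = 0 ∨ l = 0)
    (hk : k + l ≤ p - 1) : IsKinds (BTree p p k l) p (k + l) fun x => bKind p k l x.val where
  adj x y := by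
    have hx := x.isLt
    have hy := y.isLt
    rw [BTree, fromRel_adj, Ne, Fin.ext_iff]
    generalize x.val = a at *
    generalize y.val = b at *
    obtain rfl | rfl : l = 0 ∨ l = 1 := by omega
    · unfold bKind
      split_ifs <;> subst_vars <;> simp [kindAdj] <;> omega
    · obtain rfl : k = 0 := by omega
      unfold bKind
      split_ifs <;> subst_vars <;> simp [kindAdj] <;> omega
  count i := by
    have hcount : #{x : Fin (p + p) | bKind p k l x.val = i} =
        #{x ∈ Iio (p + p) | bKind p k l x = i} := by
      rw [← Fin.map_valEmbedding_univ, filter_map, card_map]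
      rfl
    rw [hcount]
    have hset : {x ∈ Iio (p + p) | bKind p k l x = i} =
        (![{0}, {1}, {2 + l}, (Icc 2 p).erase (2 + l), Ico (p + k + l + 1) (p + p),
          Ico (p + 1) (p + k + l + 1)] : Fin 6 → Finset ℕ) i := by
      ext x
      fin_cases i <;> simp <;> unfold bKind <;> split_ifs <;> simp <;> omega
    rw [hset]
    fin_cases i <;> simp [kindCount]
    · rw [card_erase_of_mem (by simp; omega)]
      simp
      omega
    · omega
    · omega

end Roles

section Shape

open scoped Classical
open Finset

variable {V : Type*}

lemma eq_one_of_sum_eq_card {s : Finset V} {d : V → ℕ} (hd : ∀ x ∈ s, 0 < d x)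
    (h : ∑ x ∈ s, d x = #s) {x : V} (hx : x ∈ s) : d x = 1 := by
  rw [card_eq_sum_ones] at h
  exact ((sum_eq_sum_iff_of_le fun y hy => Nat.succ_le_of_lt (hd y hy)).1 h.symm x hx).symm

variable [Fintype V]

lemma eq_of_adj_of_degree_eq_one {G : SimpleGraph V} {x y z : V} (h : G.degree x = 1)
    (hy : G.Adj x y) (hz : G.Adj x z) : y = z :=
  (G.degree_eq_one_iff_existsUnique_adj.1 h).unique hy hz

set_option maxHeartbeats 2000000 in
lemma exists_isKinds [DecidableEq V] {G : SimpleGraph V} {p k : ℕ} (X : Finset V)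
    (hXc : #X = p) (hYc : #Xᶜ = p)
    (hbip : ∀ ⦃x y⦄, G.Adj x y → (x ∈ X ↔ y ∉ X)) (hpos : ∀ x, 0 < G.degree x)
    (hX : ∑ x ∈ X, G.degree x = 2 * p - 1) (hY : ∑ x ∈ Xᶜ, G.degree x = 2 * p - 1)
    {u v w : V} (hu : u ∈ X) (hv : v ∈ Xᶜ) (hw : w ∈ Xᶜ) (hvw : v ≠ w)
    (hdu : G.degree u = p) (hk : k ≤ p - 1) (hdv : G.degree v = p - k) (hdw : G.degree w = k + 1) :
    ∃ c, IsKinds G p k c := by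
  have hp : 0 < p := hXc ▸ card_pos.2 ⟨u, hu⟩
  have hw' : w ∈ Xᶜ.erase v := mem_erase.2 ⟨hvw.symm, hw⟩
  have hu_nbr : ∀ y, G.Adj u y ↔ y ∉ X := by
    have : G.neighborFinset u = Xᶜ := by
      refine eq_of_subset_of_card_le (fun y hy => ?_) (by simp [hYc, hdu])
      rw [mem_compl]
      exact (hbip ((G.mem_neighborFinset u y).1 hy)).1 hu
    intro y
    rw [← G.mem_neighborFinset, this, mem_compl]
  have hleafX : ∀ x ∈ X, x ≠ u → G.degree x = 1 := by
    intro x hx hxu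
    refine eq_one_of_sum_eq_card (s := X.erase u) (fun y _ => hpos y) ?_ (mem_erase.2 ⟨hxu, hx⟩)
    have := add_sum_erase X (fun x => G.degree x) hu
    rw [card_erase_of_mem hu]
    omega
  have hleafY : ∀ y, y ∉ X → y ≠ v → y ≠ w → G.degree y = 1 := by
    intro y hy hyv hyw
    refine eq_one_of_sum_eq_card (s := (Xᶜ.erase v).erase w) (fun y _ => hpos y) ?_
      (by simp [hy, hyv, hyw])
    have h₁ := add_sum_erase Xᶜ (fun x => G.degree x) hv
    have h₂ := add_sum_erase (Xᶜ.erase v) (fun x => G.degree x) hw'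
    rw [card_erase_of_mem hw', card_erase_of_mem hv]
    omega
  rw [mem_compl] at hv hw
  have hnbrY : ∀ y, y ∉ X → y ≠ v → y ≠ w → ∀ x, G.Adj y x → x = u := fun y hy hyv hyw x hyx =>
    eq_of_adj_of_degree_eq_one (hleafY y hy hyv hyw) hyx ((hu_nbr y).2 hy).symm
  have hnbrX : ∀ x ∈ X, x ≠ u → (G.Adj x w ↔ ¬ G.Adj x v) := by
    intro x hx hxu
    obtain ⟨y, hy⟩ := (G.degree_pos_iff_exists_adj x).1 (hpos x)
    have := hbip hy
    have h₁ := hnbrY y (this.1 hx)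
    have h₂ : G.Adj x v → G.Adj x w → v = w := eq_of_adj_of_degree_eq_one (hleafX x hx hxu)
    refine ⟨fun h h' => hvw (h₂ h' h), fun h => ?_⟩
    have hyv : y ≠ v := fun hyv => h (hyv ▸ hy)
    by_contra hxw
    exact hxu (h₁ hyv (fun hyw => hxw (hyw ▸ hy)) x hy.symm)
  refine ⟨fun x => if x = u then 0 else if x = v then 1 else if x = w then 2
    else if x ∉ X then 3 else if G.Adj x v then 4 else 5, ⟨fun x y => ?_, fun i => ?_⟩⟩
  · have h₁ := hbip (x := x) (y := y)
    have h₂ := hnbrX x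
    have h₃ := hnbrX y
    have h₄ := hnbrY x
    have h₅ := hnbrY y
    have h₆ := hu_nbr x
    have h₇ := hu_nbr y
    have h₈ := G.adj_comm x y
    have h₉ := G.adj_comm u x
    have h₁₀ := G.adj_comm v y
    have h₁₁ := G.adj_comm w y
    split_ifs <;> simp [kindAdj] <;> grind
  · have hset : ({x | (if x = u then 0 else if x = v then 1 else if x = w then 2
          else if x ∉ X then 3 else if G.Adj x v then 4 else 5 : Fin 6) = i} : Finset V) =
        (![{u}, {v}, {w}, (Xᶜ.erase v).erase w, (G.neighborFinset v).erase u,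
          (G.neighborFinset w).erase u] : Fin 6 → Finset V) i := by
      ext x
      have h₁ := hbip (x := x) (y := v)
      have h₂ := hbip (x := x) (y := w)
      have h₃ := hnbrX x
      have h₄ := G.adj_comm x v
      have h₅ := G.adj_comm x w
      fin_cases i <;> simp <;> split_ifs <;> grind
    rw [hset]
    have hvu : u ∈ G.neighborFinset v := by simpa using ((hu_nbr v).2 hv).symm
    have hwu : u ∈ G.neighborFinset w := by simpa using ((hu_nbr w).2 hw).symm
    fin_cases i <;> simp [kindCount]
    · rw [card_erase_of_mem hw', card_erase_of_mem (by simpa using hv), hYc]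
      omega
    · rw [card_erase_of_mem hvu, card_neighborFinset_eq_degree]
      omega
    · rw [card_erase_of_mem hwu, card_neighborFinset_eq_degree]
      omega

end Shape

section Trees

open scoped Classical
open Finset

lemma sum_degree_sq_eq {V : Type*} [Fintype V] (G : SimpleGraph V) {p : ℕ} (X : Finset V)
    (hXc : #X = p) (hpos : ∀ x, 0 < G.degree x) (hX : ∑ x ∈ X, G.degree x = 2 * p - 1) :
    ∑ x ∈ X, (G.degree x - 1) = p - 1 ∧
      ∑ x ∈ X, G.degree x ^ 2 = ∑ x ∈ X, (G.degree x - 1) ^ 2 + 2 * (p - 1) + p := by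
  have h₁ : ∑ x ∈ X, G.degree x = ∑ x ∈ X, (G.degree x - 1) + p := by
    rw [← hXc, card_eq_sum_ones, ← sum_add_distrib]
    exact sum_congr rfl fun x _ => (Nat.sub_add_cancel (hpos x)).symm
  have h₂ : ∑ x ∈ X, (G.degree x - 1) = p - 1 := by omega
  refine ⟨h₂, ?_⟩
  rw [← h₂, mul_sum]
  nth_rw 1 [← hXc]
  rw [card_eq_sum_ones, ← sum_add_distrib, ← sum_add_distrib]
  refine sum_congr rfl fun x _ => ?_
  obtain ⟨t, ht⟩ := Nat.exists_eq_add_of_lt (hpos x)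
  rw [ht, show 0 + t + 1 - 1 = t by omega]
  ring

lemma two_sides_lt {m : ℕ} (hm : 3 ≤ m) {a b : ℕ} (h : a + b < m ^ 2 + (m - 2) ^ 2 + 4) :
    (a + 2 * m + (m + 1)) + (b + 2 * m + (m + 1)) <
      (m + 1) ^ 2 + (m + 1 - 2) ^ 2 + 9 + (2 * (m + 1) - 3) := by
  obtain ⟨t, rfl⟩ := Nat.exists_eq_add_of_le hm
  rw [show 3 + t - 2 = t + 1 by omega] at h
  rw [show 3 + t + 1 - 2 = t + 2 by omega, show 2 * (3 + t + 1) - 3 = 2 * t + 5 by omega]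
  nlinarith

/-- A tree with a `(p, p)`-bipartition and a vertex of degree `p` is `B_{p,p}^{0,0}`,
`B_{p,p}^{0,1}` or `B_{p,p}^{2,0}`, or its sum of squared degrees is less than that of the last. -/
lemma exists_isKinds_or_sum_degree_sq_lt {V : Type*} [Fintype V] [DecidableEq V]
    {G : SimpleGraph V} {p : ℕ} (hp : 4 ≤ p) (X : Finset V) (hXc : #X = p) (hYc : #Xᶜ = p)
    (hbip : ∀ ⦃x y⦄, G.Adj x y → (x ∈ X ↔ y ∉ X)) (hpos : ∀ x, 0 < G.degree x)
    (hX : ∑ x ∈ X, G.degree x = 2 * p - 1) (hY : ∑ x ∈ Xᶜ, G.degree x = 2 * p - 1)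
    {u : V} (hu : u ∈ X) (hdu : G.degree u = p) :
    (∃ k ≤ 2, ∃ c, IsKinds G p k c) ∨
      ∑ x, G.degree x ^ 2 < p ^ 2 + (p - 2) ^ 2 + 9 + (2 * p - 3) := by
  obtain ⟨m, rfl⟩ : ∃ m, p = m + 1 := ⟨p - 1, by omega⟩
  obtain ⟨hX₁, hX₂⟩ := sum_degree_sq_eq G X hXc hpos hX
  obtain ⟨hY₁, hY₂⟩ := sum_degree_sq_eq G Xᶜ hYc hpos hY
  rw [Nat.add_sub_cancel] at hX₁ hX₂ hY₁ hY₂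
  rcases exists_two_parts_or_sum_sq_lt Xᶜ (fun x => G.degree x - 1) (by omega) (by omega) hY₁ with
    ⟨k, hk, v, hv, w, hw, hvw, hdv, hdw⟩ | hlt
  · have := hpos v
    have := hpos w
    exact .inl ⟨k, hk, exists_isKinds X hXc hYc hbip hpos hX hY hu hv hw hvw hdu (by omega)
      (by omega) (by omega)⟩
  · right
    have hXsq : ∑ x ∈ X, (G.degree x - 1) ^ 2 ≤ m ^ 2 := by
      rw [← hX₁]
      exact sum_sq_le_sq_sum_of_nonneg (fun _ _ => Nat.zero_le _)
    rw [← sum_add_sum_compl X, hX₂, hY₂]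
    exact two_sides_lt (by omega) (by omega)

lemma sum_degree_sq_lt {V : Type*} [Fintype V] [DecidableEq V] {G : SimpleGraph V} {p : ℕ}
    (hp : 4 ≤ p) (X : Finset V) (hXc : #X = p) (hYc : #Xᶜ = p) (hpos : ∀ x, 0 < G.degree x)
    (hX : ∑ x ∈ X, G.degree x = 2 * p - 1) (hY : ∑ x ∈ Xᶜ, G.degree x = 2 * p - 1)
    (hlt : ∀ x, G.degree x < p) :
    ∑ x, G.degree x ^ 2 < p ^ 2 + (p - 2) ^ 2 + 9 + (2 * p - 3) := by
  obtain ⟨m, rfl⟩ : ∃ m, p = m + 1 + 1 := ⟨p - 2, by omega⟩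
  obtain ⟨hX₁, hX₂⟩ := sum_degree_sq_eq G X hXc hpos hX
  obtain ⟨hY₁, hY₂⟩ := sum_degree_sq_eq G Xᶜ hYc hpos hY
  rw [Nat.add_sub_cancel] at hX₁ hX₂ hY₁ hY₂
  have hle : ∀ x, G.degree x - 1 ≤ m := fun x => by
    have := hlt x
    omega
  have h₁ := sum_sq_le_of_le_pred X _ hX₁ fun x _ => hle x
  have h₂ := sum_sq_le_of_le_pred Xᶜ _ hY₁ fun x _ => hle x
  rw [← sum_add_sum_compl X, hX₂, hY₂]
  refine two_sides_lt (by omega) ((add_le_add h₁ h₂).trans_lt ?_)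
  obtain ⟨t, rfl⟩ : ∃ t, m = t + 1 := ⟨m - 1, by omega⟩
  rw [show t + 1 + 1 - 2 = t by omega]
  nlinarith

end Trees

/-- For `p = q ≥ 4` and `n = p + q`, every tree `T ∈ 𝒯_n^{p,q}`
isomorphic to none of `B_{p,q}^{0,0}`, `B_{p,q}^{0,1}`, `B_{p,q}^{2,0}` satisfies
`T ≺_s B_{p,q}^{2,0}`: `B_{p,q}^{2,0}` is the unique third last tree in the
S-order among `𝒯_n^{p,q}`. -/
theorem stmt_4 (p q : ℕ) (hp : 4 ≤ p) (hpq : p = q)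
    (T : SimpleGraph (Fin (p + q))) (hT : TreeBip p q T)
    (h0 : ¬ Nonempty (T ≃g BTree p q 0 0))
    (h1 : ¬ Nonempty (T ≃g BTree p q 0 1))
    (h2 : ¬ Nonempty (T ≃g BTree p q 2 0)) :
    SLt T (BTree p q 2 0) := by
  classical
  subst hpq
  obtain ⟨htree, A, hAc, hA⟩ := hT
  have hcard : Fintype.card (Fin (p + p)) = p + p := Fintype.card_fin _
  have : Nontrivial (Fin (p + p)) := Fin.nontrivial_iff_two_le.2 (by omega)
  have hpos : ∀ x, 0 < T.degree x := fun x =>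
    htree.connected.preconnected.degree_pos_of_nontrivial x
  have hAc' : Aᶜ.card = p := by rw [Finset.card_compl, hAc, hcard]; omega
  have hA' : ∀ ⦃x y : Fin (p + p)⦄, T.Adj x y → (x ∈ Aᶜ ↔ y ∉ Aᶜ) := fun x y hxy => by
    have := hA hxy
    simp only [Finset.mem_compl]
    tauto
  have hedges : T.edgeFinset.card = 2 * p - 1 := by
    have := htree.card_edgeFinset
    omega
  have hbip : T.IsBipartiteWith (A : Set (Fin (p + p))) (Aᶜ : Finset (Fin (p + p))) := by
    refine ⟨by simpa using disjoint_compl_right, fun x y hxy => ?_⟩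
    have := hA hxy
    simp only [Finset.mem_coe, Finset.mem_compl]
    tauto
  have hX := isBipartiteWith_sum_degrees_eq_card_edges hbip
  have hY := isBipartiteWith_sum_degrees_eq_card_edges' hbip
  rw [hedges] at hX hY
  have hB := isKinds_bTree (p := p) (k := 2) (l := 0) (by omega) (by omega) (by omega) (by omega)
  suffices hlt : ∑ x, T.degree x ^ 2 < p ^ 2 + (p - 2) ^ 2 + 9 + (2 * p - 3) by
    refine sLt_of_sum_degree_sq_lt T (BTree p p 2 0) (by omega) htree.isAcyclic A _
      (fun x y hxy => by simpa using hA hxy) hB.bipartite ?_ ?_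
    · convert (T.sum_degrees_eq_twice_card_edges).trans (hedges ▸ (hB.sum_degree hp).symm)
    · convert hlt.trans_eq (hB.sum_degree_sq hp).symm
  by_cases hmax : ∀ x, T.degree x < p
  · exact sum_degree_sq_lt hp A hAc hAc' hpos hX hY hmax
  · have key : (∃ k ≤ 2, ∃ c, IsKinds T p k c) ∨
        ∑ x, T.degree x ^ 2 < p ^ 2 + (p - 2) ^ 2 + 9 + (2 * p - 3) := by
      push Not at hmax
      obtain ⟨u, hu⟩ := hmax
      by_cases huA : u ∈ A
      · have hdu := (isBipartiteWith_degree_le hbip huA).trans_eq hAc'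
        exact exists_isKinds_or_sum_degree_sq_lt hp A hAc hAc' hA hpos hX hY huA
          (le_antisymm hdu hu)
      · rw [← Finset.mem_compl] at huA
        have hdu := (isBipartiteWith_degree_le' hbip huA).trans_eq hAc
        exact exists_isKinds_or_sum_degree_sq_lt hp Aᶜ hAc' (by rwa [compl_compl]) hA' hpos hY
          (by rwa [compl_compl]) huA (le_antisymm hdu hu)
    rcases key with ⟨k, hk, c, hc⟩ | hlt
    · exfalso
      interval_cases k
      · exact h0 (hc.nonempty_iso (isKinds_bTree (k := 0) (l := 0) (by omega) (by omega)
          (by omega) (by omega)))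
      · exact h1 (hc.nonempty_iso (isKinds_bTree (k := 0) (l := 1) (by omega) (by omega)
          (by omega) (by omega)))
      · exact h2 (hc.nonempty_iso hB)
    · exact hlt
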